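/- Let n be a natural number, a : Fin n → ℤ, and for nonzero λ ∈ ℂ let D_a(λ) denote the diagonal matrix with diagonal entries λ^{a i}. If g ∈ GL_n(ℂ) is such that λ ↦ D_a(λ) · g · D_a(λ)⁻¹ tends to the identity matrix both along the punctured neighborhood filter 𝓝[≠] 0 on ℂ and along the cobounded filter on ℂ (λ → ∞), then g is the identity. -/

import Mathlib

/-!
The `(i, j)` entry of `D_a(λ) g D_a(λ)⁻¹` is `λ ^ (a i - a j) * g i j`. If `a i = a j` it is
constant, hence equal to its limit `1 i j`. Otherwise `λ ^ (a i - a j)` tends to `0` at one of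
`0`, `∞`, which forces the limit `1 i j` to be `0`, and its inverse tends to `0` at the other,
which forces `g i j = 0`.
-/

open Filter Matrix

lemma tendsto_zpow_nhdsNE_zero {m : ℤ} (hm : 0 < m) :
    Tendsto (fun z : ℂ => z ^ m) (nhdsWithin 0 {0}ᶜ) (nhds 0) := by
  lift m to ℕ using hm.le
  have hm' : m ≠ 0 := by omega
  simpa [hm'] using ((continuous_pow m).tendsto (0 : ℂ)).mono_left nhdsWithin_le_nhds

lemma tendsto_zpow_cobounded {m : ℤ} (hm : m < 0) :
    Tendsto (fun z : ℂ => z ^ m) (Bornology.cobounded ℂ) (nhds 0) := by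
  obtain ⟨k, rfl⟩ : ∃ k : ℕ, m = -(k : ℤ) := ⟨m.natAbs, by omega⟩
  have hk : k ≠ 0 := by omega
  simpa [hk] using (tendsto_inv₀_cobounded (α := ℂ)).pow k

/-- The limit `d` is `0` because of the filter `l`, and `c` is `0` because of `l'`. -/
lemma eq_of_tendsto_zpow_mul {l l' : Filter ℂ} [l.NeBot] [l'.NeBot] {m : ℤ} {c d : ℂ}
    (hl : Tendsto (fun z : ℂ => z ^ m) l (nhds 0))
    (hl' : Tendsto (fun z : ℂ => z ^ (-m)) l' (nhds 0)) (hne : ∀ᶠ z in l', z ≠ 0)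
    (h : Tendsto (fun z : ℂ => z ^ m * c) l (nhds d))
    (h' : Tendsto (fun z : ℂ => z ^ m * c) l' (nhds d)) : c = d := by
  have hd : d = 0 := by
    simpa using tendsto_nhds_unique h (hl.mul_const c)
  have hc : Tendsto (fun _ : ℂ => c) l' (nhds (0 * d)) := by
    refine (hl'.mul h').congr' ?_
    filter_upwards [hne] with z hz
    rw [← mul_assoc, ← zpow_add₀ hz]
    simp
  have hc0 : c = 0 * d := tendsto_nhds_unique tendsto_const_nhds hc
  rw [hc0, hd, zero_mul]

lemma conj_diagonal_zpow_apply {n : ℕ} (a : Fin n → ℤ) (g : Matrix (Fin n) (Fin n) ℂ)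
    {z : ℂ} (hz : z ≠ 0) (i j : Fin n) :
    (diagonal (fun i => z ^ a i) * g * (diagonal (fun i => z ^ a i))⁻¹) i j =
      z ^ (a i - a j) * g i j := by
  have hinv : (diagonal (fun i => z ^ a i))⁻¹ = diagonal (fun i => (z ^ a i)⁻¹) := by
    apply Matrix.inv_eq_right_inv
    rw [diagonal_mul_diagonal, ← diagonal_one]
    congr 1
    funext k
    exact mul_inv_cancel₀ (zpow_ne_zero _ hz)
  rw [hinv, mul_diagonal, diagonal_mul, zpow_sub₀ hz]
  ring

/-- If `D_a(λ) g D_a(λ)⁻¹` tends to the identity matrix both as `λ → 0` (punctured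
neighborhood filter) and as `λ → ∞` (cobounded filter on `ℂ`), then `g = 1`:
the positive and negative subgroups of `GL_n(ℂ)` intersect trivially. -/
theorem eq_one_of_tendsto_conj_diagonal_zero_and_infty (n : ℕ) (a : Fin n → ℤ)
    (g : GL (Fin n) ℂ)
    (h0 : Filter.Tendsto
      (fun lam : ℂ =>
        Matrix.diagonal (fun i => lam ^ (a i)) * (g : Matrix (Fin n) (Fin n) ℂ) *
          (Matrix.diagonal (fun i => lam ^ (a i)))⁻¹)
      (nhdsWithin (0 : ℂ) {0}ᶜ) (nhds (1 : Matrix (Fin n) (Fin n) ℂ)))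
    (hinf : Filter.Tendsto
      (fun lam : ℂ =>
        Matrix.diagonal (fun i => lam ^ (a i)) * (g : Matrix (Fin n) (Fin n) ℂ) *
          (Matrix.diagonal (fun i => lam ^ (a i)))⁻¹)
      (Bornology.cobounded ℂ) (nhds (1 : Matrix (Fin n) (Fin n) ℂ))) :
    g = 1 := by
  ext i j
  have hne0 : ∀ᶠ z : ℂ in nhdsWithin 0 {0}ᶜ, z ≠ 0 := self_mem_nhdsWithin
  have hneinf : ∀ᶠ z : ℂ in Bornology.cobounded ℂ, z ≠ 0 := Bornology.eventually_ne_cobounded 0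
  have e0 : Tendsto (fun z : ℂ => z ^ (a i - a j) * g i j) (nhdsWithin 0 {0}ᶜ)
      (nhds ((1 : Matrix (Fin n) (Fin n) ℂ) i j)) :=
    (tendsto_pi_nhds.1 (tendsto_pi_nhds.1 h0 i) j).congr'
      (hne0.mono fun z hz => conj_diagonal_zpow_apply a g hz i j)
  have einf : Tendsto (fun z : ℂ => z ^ (a i - a j) * g i j) (Bornology.cobounded ℂ)
      (nhds ((1 : Matrix (Fin n) (Fin n) ℂ) i j)) :=
    (tendsto_pi_nhds.1 (tendsto_pi_nhds.1 hinf i) j).congr'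
      (hneinf.mono fun z hz => conj_diagonal_zpow_apply a g hz i j)
  change g i j = (1 : Matrix (Fin n) (Fin n) ℂ) i j
  rcases lt_trichotomy (a i - a j) 0 with hm | hm | hm
  · exact eq_of_tendsto_zpow_mul (tendsto_zpow_cobounded hm)
      (tendsto_zpow_nhdsNE_zero (by omega)) hne0 einf e0
  · simp only [hm, zpow_zero, one_mul] at e0
    exact tendsto_nhds_unique tendsto_const_nhds e0
  · exact eq_of_tendsto_zpow_mul (tendsto_zpow_nhdsNE_zero hm)
      (tendsto_zpow_cobounded (by omega)) hneinf e0 einf
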